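/- Let k ≥ 2 be an integer and define the polynomial Y_k(z) = (π^{2k}/(2k)!) ∑_{j=0}^{k} B_{2j} B_{2k−2j} (2^{2j}−1)(2^{2k−2j}−1) C(2k,2j) z^j. Then every non-zero complex root of Y_k lies on the unit circle (has absolute value 1), and all roots of Y_k are simple. -/

import Mathlib

/-- The polynomial
`Y_k(z) = (π^{2k}/(2k)!) ∑_{j=0}^{k} B_{2j} B_{2k−2j} (2^{2j}−1)(2^{2k−2j}−1) C(2k,2j) z^j`,
viewed as a polynomial over `ℂ`. -/
noncomputable def Ypoly (k : ℕ) : Polynomial ℂ :=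
  Polynomial.C ((Real.pi ^ (2 * k) / (Nat.factorial (2 * k)) : ℝ) : ℂ) *
    ∑ j ∈ Finset.range (k + 1),
      Polynomial.C (((bernoulli (2 * j) : ℚ) : ℂ) * ((bernoulli (2 * k - 2 * j) : ℚ) : ℂ)
        * ((2 : ℂ) ^ (2 * j) - 1) * ((2 : ℂ) ^ (2 * k - 2 * j) - 1)
        * ((Nat.choose (2 * k) (2 * j)) : ℂ)) * Polynomial.X ^ j


/-!
The value of `ζ` at even integers turns the `j`-th coefficient of `Y_k`, for `0 < j < k`, into
`4 (-1)^k λ(2j) λ(2k - 2j)`, where `λ` is the Dirichlet lambda function. So `Y_k` is, up to a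
constant, `z p(z)` with `p` palindromic of degree `n = k - 2`. Since `λ` decreases to `1` from
`λ(2) = π²/8 < 2`, the coefficients `a₀, …, aₙ` of `p` have total variation less than `2 a₀`.

For such a `p`, at each of the `n + 1` points of the unit circle with `z^(n+1) = -1` one has
`(1 - z) p(z) = 2 a₀ + ∑ (aᵢ₊₁ - aᵢ) z^(i+1)`, which has positive real part. Palindromicity makes
`e^{-int/2} p(e^{it})` real, and positivity of that real part means that its sign alternates along
these points. The intermediate value theorem puts a zero between any two neighbours with arguments
in `(0, 2π)`: that gives `n` distinct zeros on the circle, which are then all the roots of `p`, each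
of them simple.
-/

open Finset
open Polynomial hiding bernoulli
open Complex (I)
open scoped ComplexConjugate Nat

lemma exists_zero_mem_Ioo_of_alternating {f : ℝ → ℝ} {a b : ℝ}
    (hf : ContinuousOn f (Set.Icc a b)) (hab : a ≤ b) {l : ℕ}
    (ha : 0 < (-1) ^ l * f a) (hb : 0 < (-1) ^ (l + 1) * f b) :
    ∃ t ∈ Set.Ioo a b, f t = 0 := by
  have hcont : ContinuousOn (fun t ↦ (-1) ^ l * f t) (Set.Icc a b) := by fun_prop
  have hb' : (-1) ^ l * f b < 0 := by
    rw [pow_succ] at hb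
    linarith
  obtain ⟨t, ht, hzero⟩ := intermediate_value_Ioo' hab hcont ⟨hb', ha⟩
  exact ⟨t, ht, by simpa using hzero⟩

lemma exists_finset_zeros_of_alternating {f : ℝ → ℝ} {θ : ℕ → ℝ} (hθ : Monotone θ) {n : ℕ}
    (hf : ContinuousOn f (Set.Icc (θ 0) (θ n))) (hsign : ∀ l ≤ n, 0 < (-1) ^ l * f (θ l)) :
    ∃ S : Finset ℝ, #S = n ∧ ∀ t ∈ S, t ∈ Set.Ioo (θ 0) (θ n) ∧ f t = 0 := by
  induction n with
  | zero => exact ⟨∅, by simp⟩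
  | succ n ih =>
    obtain ⟨S, hcard, hS⟩ := ih (hf.mono (Set.Icc_subset_Icc_right (hθ n.le_succ)))
      fun l hl ↦ hsign l (hl.trans n.le_succ)
    obtain ⟨t, ⟨hnt, htn⟩, hft⟩ := exists_zero_mem_Ioo_of_alternating
      (hf.mono (Set.Icc_subset_Icc_left (hθ n.zero_le))) (hθ n.le_succ)
      (hsign n n.le_succ) (hsign (n + 1) le_rfl)
    have htS : t ∉ S := fun h ↦ hnt.not_gt (hS t h).1.2
    refine ⟨insert t S, by rw [card_insert_of_notMem htS, hcard], fun s hs ↦ ?_⟩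
    obtain rfl | hs := mem_insert.1 hs
    · exact ⟨⟨(hθ n.zero_le).trans_lt hnt, htn⟩, hft⟩
    · obtain ⟨⟨h0s, hsn⟩, hfs⟩ := hS s hs
      exact ⟨⟨h0s, hsn.trans_le (hθ n.le_succ)⟩, hfs⟩

lemma one_sub_mul_sum_range_succ_mul_pow {R : Type*} [CommRing R] (a : ℕ → R) (x : R) (n : ℕ) :
    (1 - x) * ∑ i ∈ range (n + 1), a i * x ^ i =
      a 0 - a n * x ^ (n + 1) + ∑ i ∈ range n, (a (i + 1) - a i) * x ^ (i + 1) := by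
  induction n with
  | zero => simp; ring
  | succ n ih => rw [sum_range_succ, mul_add, ih, sum_range_succ _ n]; ring

lemma one_sub_exp_mul_I (t : ℂ) :
    1 - Complex.exp (t * I) = -2 * I * Complex.sin (t / 2) * Complex.exp (t / 2 * I) := by
  have hsq : Complex.exp (t * I) = Complex.exp (t / 2 * I) * Complex.exp (t / 2 * I) := by
    rw [← Complex.exp_add]; ring_nf
  have hinv : Complex.exp (-(t / 2) * I) * Complex.exp (t / 2 * I) = 1 := by
    rw [← Complex.exp_add]; simp
  rw [Complex.sin, hsq]
  linear_combination
    (1 - Complex.exp (t / 2 * I) * Complex.exp (t / 2 * I)) * Complex.I_sq + I ^ 2 * hinv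

/-- The argument of the `l`-th of the `N`-th roots of `-1`, counted anticlockwise from the positive
real axis and starting with `l = 0`. -/
noncomputable def negOneRootArg (N l : ℕ) : ℝ := (2 * l + 1) * Real.pi / N

lemma monotone_negOneRootArg (N : ℕ) : Monotone (negOneRootArg N) := by
  intro l m hlm
  unfold negOneRootArg
  gcongr

lemma exp_mul_half_negOneRootArg_mul_I {N : ℕ} (hN : N ≠ 0) (l : ℕ) :
    Complex.exp (N * negOneRootArg N l / 2 * I) = I * (-1) ^ l := by
  have hangle : (N * negOneRootArg N l / 2 * I : ℂ) = Real.pi / 2 * I + l * (Real.pi * I) := by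
    unfold negOneRootArg
    push_cast
    field_simp
    ring
  rw [hangle, Complex.exp_add, Complex.exp_pi_div_two_mul_I, Complex.exp_nat_mul,
    Complex.exp_pi_mul_I]

lemma exp_negOneRootArg_mul_I_pow {N : ℕ} (hN : N ≠ 0) (l : ℕ) :
    Complex.exp (negOneRootArg N l * I) ^ N = -1 := by
  have hsq : Complex.exp (negOneRootArg N l * I) ^ N =
      Complex.exp (N * negOneRootArg N l / 2 * I) ^ 2 := by
    rw [← Complex.exp_nat_mul, ← Complex.exp_nat_mul]
    push_cast
    ring_nf
  rw [hsq, exp_mul_half_negOneRootArg_mul_I hN, mul_pow, Complex.I_sq, ← pow_mul, mul_comm l,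
    pow_mul]
  simp

lemma sin_half_negOneRootArg_pos {N l : ℕ} (hl : l < N) :
    0 < Real.sin (negOneRootArg N l / 2) := by
  have hN : (0 : ℝ) < N := by exact_mod_cast l.zero_le.trans_lt hl
  have hl' : (l : ℝ) + 1 ≤ N := by exact_mod_cast hl
  apply Real.sin_pos_of_pos_of_lt_pi
  · unfold negOneRootArg
    positivity
  · rw [negOneRootArg, div_div, div_lt_iff₀ (by positivity)]
    nlinarith [Real.pi_pos]

lemma aeval_inv_mul_pow_natDegree_of_reverse_eq_self {R K : Type*} [CommSemiring R] [Field K]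
    [Algebra R K] {p : R[X]} (hp : p.reverse = p) {z : K} (hz : z ≠ 0) :
    aeval z⁻¹ p * z ^ p.natDegree = aeval z p := by
  let _ := invertibleOfNonzero hz
  simpa [hp, aeval_def] using eval₂_reverse_mul_pow (algebraMap R K) z p

section Palindromic

variable {p : ℝ[X]}

/-- The total variation `∑ |aᵢ₊₁ - aᵢ|`, `i < n`, of the coefficient sequence `a₀, …, aₙ` of a
polynomial of degree `n`. The jumps from `0` to `a₀` and from `aₙ` to `0` are not counted. -/
noncomputable def coeffVariation (p : ℝ[X]) : ℝ :=
  ∑ i ∈ range p.natDegree, |p.coeff (i + 1) - p.coeff i|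

lemma re_one_sub_mul_aeval_pos (hlead : p.leadingCoeff = p.coeff 0)
    (hvar : coeffVariation p < 2 * p.coeff 0)
    {z : ℂ} (hz : ‖z‖ = 1) (hpow : z ^ (p.natDegree + 1) = -1) :
    0 < ((1 - z) * aeval z p).re := by
  set V : ℂ := ∑ i ∈ range p.natDegree, (p.coeff (i + 1) - p.coeff i : ℂ) * z ^ (i + 1)
  have hsplit : (1 - z) * aeval z p = (2 * p.coeff 0 : ℝ) + V := by
    have heval : aeval z p = ∑ i ∈ range (p.natDegree + 1), (p.coeff i : ℂ) * z ^ i := by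
      simp [aeval_eq_sum_range]
    rw [heval, one_sub_mul_sum_range_succ_mul_pow (fun i ↦ (p.coeff i : ℂ)), hpow,
      coeff_natDegree, hlead]
    push_cast
    ring
  have hV_lt : ‖V‖ < 2 * p.coeff 0 := by
    refine (norm_sum_le _ _).trans_lt (lt_of_eq_of_lt (sum_congr rfl fun i _ ↦ ?_) hvar)
    rw [norm_mul, norm_pow, hz, one_pow, mul_one, ← Complex.ofReal_sub, Complex.norm_real,
      Real.norm_eq_abs]
  rw [hsplit, Complex.add_re, Complex.ofReal_re]
  linarith [neg_le_of_abs_le (Complex.abs_re_le_norm V)]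

/-- The function `e^{-int/2} p(e^{it})` of a real angle `t`, where `n` is the degree of `p`. It is
real-valued when `p` is palindromic, so taking the real part loses nothing. -/
noncomputable def rotatedEval (p : ℝ[X]) (t : ℝ) : ℝ :=
  (Complex.exp (-(p.natDegree * t / 2 * I)) * aeval (Complex.exp (t * I)) p).re

lemma continuous_rotatedEval (p : ℝ[X]) : Continuous (rotatedEval p) := by
  unfold rotatedEval
  fun_prop

lemma aeval_exp_mul_I_eq (hp : p.reverse = p) (t : ℝ) :
    aeval (Complex.exp (t * I)) p = Complex.exp (p.natDegree * t / 2 * I) * rotatedEval p t := by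
  set w := Complex.exp (-(p.natDegree * t / 2 * I)) * aeval (Complex.exp (t * I)) p with hw
  have hconj : conj w = w := by
    have hhalf : conj (Complex.exp (-(p.natDegree * t / 2 * I))) =
        Complex.exp (-(p.natDegree * t / 2 * I)) * Complex.exp (t * I) ^ p.natDegree := by
      rw [← Complex.exp_conj, ← Complex.exp_nat_mul, ← Complex.exp_add]
      congr 1
      simp only [map_neg, map_mul, map_div₀, map_natCast, map_ofNat, Complex.conj_ofReal,
        Complex.conj_I]
      ring
    rw [hw, map_mul, ← aeval_conj, ← Complex.inv_eq_conj (Complex.norm_exp_ofReal_mul_I t), hhalf,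
      mul_assoc, mul_comm (_ ^ _), aeval_inv_mul_pow_natDegree_of_reverse_eq_self hp
        (Complex.exp_ne_zero _)]
  have hreal : (rotatedEval p t : ℂ) = w := Complex.conj_eq_iff_re.1 hconj
  rw [hreal, hw, ← mul_assoc, ← Complex.exp_add, add_neg_cancel, Complex.exp_zero, one_mul]

lemma rotatedEval_negOneRootArg_alternating (hp : p.reverse = p)
    (hvar : coeffVariation p < 2 * p.coeff 0)
    {l : ℕ} (hl : l ≤ p.natDegree) :
    0 < (-1) ^ l * rotatedEval p (negOneRootArg (p.natDegree + 1) l) := by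
  set t := negOneRootArg (p.natDegree + 1) l with ht
  have hfactor : (1 - Complex.exp (t * I)) * aeval (Complex.exp (t * I)) p =
      (2 * Real.sin (t / 2) * ((-1) ^ l * rotatedEval p t) : ℝ) := by
    have hexp : Complex.exp (t / 2 * I) * Complex.exp (p.natDegree * t / 2 * I) = I * (-1) ^ l := by
      rw [← exp_mul_half_negOneRootArg_mul_I p.natDegree.succ_ne_zero l, ← ht, ← Complex.exp_add]
      push_cast
      ring_nf
    rw [aeval_exp_mul_I_eq hp, one_sub_exp_mul_I]
    push_cast
    linear_combination (-2 * I * Complex.sin (t / 2) * rotatedEval p t) * hexp -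
      (2 * Complex.sin (t / 2) * (-1) ^ l * rotatedEval p t) * Complex.I_sq
  have hlead : p.leadingCoeff = p.coeff 0 := by rw [← coeff_zero_reverse, hp]
  have hpos := re_one_sub_mul_aeval_pos hlead hvar (Complex.norm_exp_ofReal_mul_I t)
    (exp_negOneRootArg_mul_I_pow p.natDegree.succ_ne_zero l)
  rw [hfactor, Complex.ofReal_re] at hpos
  have hsin := sin_half_negOneRootArg_pos (Nat.lt_succ_of_le hl)
  exact pos_of_mul_pos_right hpos (by positivity)

lemma exists_finset_roots_norm_eq_one (hp : p.reverse = p)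
    (hvar : coeffVariation p < 2 * p.coeff 0) :
    ∃ S : Finset ℂ, #S = p.natDegree ∧ ∀ z ∈ S, ‖z‖ = 1 ∧ aeval z p = 0 := by
  obtain ⟨S, hcard, hS⟩ := exists_finset_zeros_of_alternating
    (monotone_negOneRootArg (p.natDegree + 1)) (continuous_rotatedEval p).continuousOn
    fun l hl ↦ rotatedEval_negOneRootArg_alternating hp hvar hl
  have hspan : negOneRootArg (p.natDegree + 1) p.natDegree - negOneRootArg (p.natDegree + 1) 0 <
      2 * Real.pi := by
    rw [negOneRootArg, negOneRootArg, ← sub_div, div_lt_iff₀ (by positivity)]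
    push_cast
    nlinarith [Real.pi_pos]
  have hinj : Set.InjOn (fun t : ℝ ↦ (Circle.exp t : ℂ)) S :=
    Circle.coe_injective.comp_injOn <|
      (Circle.exp_injOn_Icc hspan).mono fun t ht ↦ Set.Ioo_subset_Icc_self (hS t ht).1
  refine ⟨S.image fun t ↦ (Circle.exp t : ℂ), by rw [card_image_of_injOn hinj, hcard],
    fun z hz ↦ ?_⟩
  obtain ⟨t, ht, rfl⟩ := mem_image.1 hz
  refine ⟨Circle.norm_coe _, ?_⟩
  rw [Circle.coe_exp, aeval_exp_mul_I_eq hp, (hS t ht).2, Complex.ofReal_zero, mul_zero]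

theorem aroots_nodup_and_norm_eq_one_of_reverse_eq_self (hp : p.reverse = p)
    (hvar : coeffVariation p < 2 * p.coeff 0) :
    (p.aroots ℂ).Nodup ∧ ∀ z ∈ p.aroots ℂ, ‖z‖ = 1 := by
  obtain ⟨S, hcard, hS⟩ := exists_finset_roots_norm_eq_one hp hvar
  have hp0 : p.map (algebraMap ℝ ℂ) ≠ 0 := by
    refine (Polynomial.map_ne_zero_iff (algebraMap ℝ ℂ).injective).2 ?_
    rintro rfl
    simp [coeffVariation] at hvar
  have hroots : p.aroots ℂ = S.val := by
    refine roots_eq_of_natDegree_le_card_of_ne_zero (fun z hz ↦ ?_) ?_ hp0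
    · rw [eval_map_algebraMap, (hS z hz).2]
    · rw [hcard, natDegree_map]
  rw [hroots]
  exact ⟨S.nodup, fun z hz ↦ (hS z hz).1⟩

end Palindromic

section MirrorProduct

variable {R : Type*}

/-- The polynomial `∑ i ≤ n, u i * u (n - i) * X ^ i`. Its coefficient sequence is palindromic, the
product of `u 0, …, u n` with its own reversal. -/
noncomputable def mirrorProduct [Semiring R] (u : ℕ → R) (n : ℕ) : R[X] :=
  ∑ i ∈ range (n + 1), C (u i * u (n - i)) * X ^ i

lemma coeff_mirrorProduct [Semiring R] (u : ℕ → R) (n m : ℕ) :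
    (mirrorProduct u n).coeff m = if m ≤ n then u m * u (n - m) else 0 := by
  simp only [mirrorProduct, finsetSum_coeff, coeff_C_mul, coeff_X_pow, mul_ite, mul_one, mul_zero,
    sum_ite_eq, mem_range, Nat.lt_succ_iff]

lemma natDegree_mirrorProduct [Semiring R] [NoZeroDivisors R] {u : ℕ → R} {n : ℕ}
    (h0 : u 0 ≠ 0) (hn : u n ≠ 0) : (mirrorProduct u n).natDegree = n := by
  apply natDegree_eq_of_le_of_coeff_ne_zero
  · refine natDegree_le_iff_coeff_eq_zero.2 fun m hm ↦ ?_
    rw [coeff_mirrorProduct, if_neg hm.not_ge]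
  · simp [coeff_mirrorProduct, h0, hn]

lemma mirrorProduct_ne_zero [Semiring R] [NoZeroDivisors R] {u : ℕ → R} {n : ℕ}
    (h0 : u 0 ≠ 0) (hn : u n ≠ 0) : mirrorProduct u n ≠ 0 := fun h ↦ by
  simpa [coeff_mirrorProduct, h0, hn] using congrArg (coeff · 0) h

lemma reverse_mirrorProduct [CommSemiring R] [NoZeroDivisors R] {u : ℕ → R} {n : ℕ}
    (h0 : u 0 ≠ 0) (hn : u n ≠ 0) : (mirrorProduct u n).reverse = mirrorProduct u n := by
  ext m
  rw [coeff_reverse, natDegree_mirrorProduct h0 hn]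
  obtain hm | hm := le_or_gt m n
  · rw [revAt_le hm, coeff_mirrorProduct, coeff_mirrorProduct, if_pos hm, if_pos (n.sub_le m),
      Nat.sub_sub_self hm, mul_comm]
  · rw [revAt_eq_self_of_lt hm]

lemma abs_mul_sub_mul_le {x x' y y' M : ℝ} (hx : |x| ≤ M) (hy : |y'| ≤ M) :
    |x' * y' - x * y| ≤ M * |x' - x| + M * |y' - y| :=
  calc |x' * y' - x * y| = |y' * (x' - x) + x * (y' - y)| := by ring_nf
    _ ≤ |y'| * |x' - x| + |x| * |y' - y| := by
      simpa only [abs_mul] using abs_add_le (y' * (x' - x)) (x * (y' - y))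
    _ ≤ M * |x' - x| + M * |y' - y| := by gcongr

lemma sum_abs_sub_succ_of_antitone {u : ℕ → ℝ} (hu : Antitone u) (n : ℕ) :
    ∑ i ∈ range n, |u (i + 1) - u i| = u 0 - u n := by
  rw [← sum_range_sub']
  refine sum_congr rfl fun i _ ↦ ?_
  rw [abs_sub_comm, abs_of_nonneg (sub_nonneg.2 (hu i.le_succ))]

lemma sum_abs_mul_reflect_sub_le {u : ℕ → ℝ} (hu : Antitone u) {n : ℕ} (hn : 0 ≤ u n) :
    ∑ i ∈ range n, |u (i + 1) * u (n - (i + 1)) - u i * u (n - i)| ≤ 2 * u 0 * (u 0 - u n) := by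
  have habs : ∀ i ≤ n, |u i| ≤ u 0 := fun i hi ↦ by
    rw [abs_of_nonneg (hn.trans (hu hi))]
    exact hu i.zero_le
  have hreflect : ∑ i ∈ range n, |u (n - (i + 1)) - u (n - i)| = u 0 - u n := by
    rw [← sum_abs_sub_succ_of_antitone hu, ← sum_range_reflect]
    refine sum_congr rfl fun i hi ↦ ?_
    have hi := mem_range.1 hi
    rw [abs_sub_comm, show n - (n - 1 - i + 1) = i by lia, show n - (n - 1 - i) = i + 1 by lia]
  calc ∑ i ∈ range n, |u (i + 1) * u (n - (i + 1)) - u i * u (n - i)|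
      ≤ ∑ i ∈ range n, (u 0 * |u (i + 1) - u i| + u 0 * |u (n - (i + 1)) - u (n - i)|) :=
        sum_le_sum fun i hi ↦ abs_mul_sub_mul_le (habs i (mem_range.1 hi).le)
          (habs _ (n.sub_le _))
    _ = 2 * u 0 * (u 0 - u n) := by
        rw [sum_add_distrib, ← mul_sum, ← mul_sum, sum_abs_sub_succ_of_antitone hu, hreflect]
        ring

lemma coeffVariation_mirrorProduct_lt {u : ℕ → ℝ} (hu : Antitone u) {n : ℕ}
    (hun : u 0 < 2 * u n) :
    coeffVariation (mirrorProduct u n) < 2 * (mirrorProduct u n).coeff 0 := by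
  have h0n : u n ≤ u 0 := hu n.zero_le
  have hdeg : (mirrorProduct u n).natDegree = n :=
    natDegree_mirrorProduct (by linarith) (by linarith)
  have hsum : coeffVariation (mirrorProduct u n) =
      ∑ i ∈ range n, |u (i + 1) * u (n - (i + 1)) - u i * u (n - i)| := by
    rw [coeffVariation, hdeg]
    refine sum_congr rfl fun i hi ↦ ?_
    have hi := mem_range.1 hi
    rw [coeff_mirrorProduct, coeff_mirrorProduct, if_pos (Nat.succ_le_of_lt hi), if_pos hi.le]
  calc coeffVariation (mirrorProduct u n)
      ≤ 2 * u 0 * (u 0 - u n) := hsum.trans_le (sum_abs_mul_reflect_sub_le hu (by linarith))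
    _ < 2 * u 0 * u n := by gcongr <;> linarith
    _ = 2 * (mirrorProduct u n).coeff 0 := by simp [coeff_mirrorProduct, mul_assoc]

theorem aroots_mirrorProduct_nodup_and_norm_eq_one {u : ℕ → ℝ} (hu : Antitone u) {n : ℕ}
    (hun : u 0 < 2 * u n) :
    ((mirrorProduct u n).aroots ℂ).Nodup ∧ ∀ z ∈ (mirrorProduct u n).aroots ℂ, ‖z‖ = 1 := by
  have h0n : u n ≤ u 0 := hu n.zero_le
  exact aroots_nodup_and_norm_eq_one_of_reverse_eq_self
    (reverse_mirrorProduct (by linarith) (by linarith)) (coeffVariation_mirrorProduct_lt hu hun)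

end MirrorProduct

/-- The Dirichlet lambda function `λ(s) = ∑ 1 / (2 n + 1) ^ s` at natural arguments. The series
converges for `2 ≤ s`; otherwise the value is the junk value `0`. -/
noncomputable def dirichletLambda (s : ℕ) : ℝ := ∑' n : ℕ, 1 / (2 * n + 1 : ℝ) ^ s

lemma summable_one_div_odd_pow {s : ℕ} (hs : 2 ≤ s) :
    Summable fun n : ℕ ↦ 1 / (2 * n + 1 : ℝ) ^ s := by
  have hinj : Function.Injective fun n : ℕ ↦ 2 * n + 1 := fun a b h ↦ by simpa using h
  simpa [Function.comp_def] using (Real.summable_one_div_nat_pow.2 hs).comp_injective hinj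

lemma one_le_dirichletLambda {s : ℕ} (hs : 2 ≤ s) : 1 ≤ dirichletLambda s := by
  simpa [dirichletLambda] using (summable_one_div_odd_pow hs).le_tsum 0 fun n _ ↦ by positivity

lemma antitoneOn_dirichletLambda : AntitoneOn dirichletLambda (Set.Ici 2) := by
  intro s hs t ht hst
  refine (summable_one_div_odd_pow ht).tsum_le_tsum (fun n ↦ ?_) (summable_one_div_odd_pow hs)
  have : (1 : ℝ) ≤ 2 * n + 1 := by linarith [n.cast_nonneg (α := ℝ)]
  gcongr

lemma dirichletLambda_eq_mul_tsum {s : ℕ} (hs : 2 ≤ s) :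
    dirichletLambda s = (1 - 1 / 2 ^ s) * ∑' n : ℕ, 1 / (n : ℝ) ^ s := by
  have heven (n : ℕ) : 1 / ((2 * n : ℕ) : ℝ) ^ s = 1 / 2 ^ s * (1 / (n : ℝ) ^ s) := by
    push_cast
    rw [mul_pow, one_div_mul_one_div]
  have hodd (n : ℕ) : 1 / ((2 * n + 1 : ℕ) : ℝ) ^ s = 1 / (2 * n + 1 : ℝ) ^ s := by push_cast; rfl
  have hsplit := tsum_even_add_odd (f := fun n : ℕ ↦ 1 / (n : ℝ) ^ s)
    (by simpa only [heven] using (Real.summable_one_div_nat_pow.2 hs).mul_left (1 / 2 ^ s))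
    (by simpa only [hodd] using summable_one_div_odd_pow hs)
  simp only [heven, hodd, tsum_mul_left] at hsplit
  rw [dirichletLambda]
  linarith

lemma dirichletLambda_two_mul {j : ℕ} (hj : j ≠ 0) :
    dirichletLambda (2 * j) = (-1) ^ (j + 1) * bernoulli (2 * j) * (2 ^ (2 * j) - 1) *
      Real.pi ^ (2 * j) / (2 * (2 * j)!) := by
  have hpow : (2 : ℝ) ^ (2 * j) = 2 * 2 ^ (2 * j - 1) := by
    rw [← pow_succ', Nat.sub_add_cancel (by lia)]
  rw [dirichletLambda_eq_mul_tsum (by lia), (hasSum_zeta_nat hj).tsum_eq, hpow]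
  field_simp

lemma dirichletLambda_two_lt_two : dirichletLambda 2 < 2 := by
  have hval : dirichletLambda 2 = Real.pi ^ 2 / 8 := by
    rw [← mul_one 2, dirichletLambda_two_mul one_ne_zero]
    norm_num [bernoulli_two]
    ring
  rw [hval]
  nlinarith [Real.pi_lt_four, Real.pi_pos]

lemma coeff_Ypoly (k m : ℕ) :
    (Ypoly k).coeff m = ((Real.pi ^ (2 * k) / (2 * k)! : ℝ) : ℂ) * if m ≤ k then
      (bernoulli (2 * m) : ℂ) * bernoulli (2 * k - 2 * m) * (2 ^ (2 * m) - 1) *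
        (2 ^ (2 * k - 2 * m) - 1) * (2 * k).choose (2 * m) else 0 := by
  simp only [Ypoly, coeff_C_mul, finsetSum_coeff, coeff_X_pow, mul_ite, mul_one, mul_zero,
    sum_ite_eq, mem_range, Nat.lt_succ_iff]

lemma coeff_Ypoly_add {i j : ℕ} (hi : i ≠ 0) (hj : j ≠ 0) :
    (Ypoly (i + j)).coeff i =
      (4 * (-1) ^ (i + j) * (dirichletLambda (2 * i) * dirichletLambda (2 * j)) : ℝ) := by
  have hsub : 2 * i + 2 * j - 2 * i = 2 * j := by lia
  have hsign : (-1 : ℂ) ^ (i + j) * ((-1) ^ (i + 1) * (-1) ^ (j + 1)) = 1 := by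
    rw [← pow_add, ← pow_add]
    exact Even.neg_one_pow ⟨i + j + 1, by ring⟩
  rw [coeff_Ypoly, if_pos (i.le_add_right j), mul_add, hsub, Nat.cast_add_choose,
    dirichletLambda_two_mul hi, dirichletLambda_two_mul hj]
  have hfact : ((2 * i + 2 * j)! : ℂ) ≠ 0 := by exact_mod_cast Nat.factorial_ne_zero _
  push_cast
  field_simp
  rw [pow_add]
  linear_combination (-4 * ((Real.pi : ℂ) ^ (2 * i) * Real.pi ^ (2 * j) * bernoulli (2 * i) *
    bernoulli (2 * j) * (2 ^ (2 * i) - 1) * (2 ^ (2 * j) - 1)) /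
    ((2 * i)! * (2 * j)!)) * hsign

lemma coeff_Ypoly_zero (k : ℕ) : (Ypoly k).coeff 0 = 0 := by
  simp [coeff_Ypoly]

lemma coeff_Ypoly_eq_zero_of_le {k m : ℕ} (hkm : k ≤ m) : (Ypoly k).coeff m = 0 := by
  obtain rfl | hlt := hkm.eq_or_lt
  · simp [coeff_Ypoly]
  · simp [coeff_Ypoly, hlt.not_ge]

/-- The values of the Dirichlet lambda function at the positive even integers: `λ(2), λ(4), …`. -/
noncomputable def evenLambda (i : ℕ) : ℝ := dirichletLambda (2 * (i + 1))

lemma Ypoly_eq_mirrorProduct (n : ℕ) :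
    Ypoly (n + 2) =
      C (4 * (-1) ^ n) * (X * (mirrorProduct evenLambda n).map (algebraMap ℝ ℂ)) := by
  ext m
  rw [coeff_C_mul]
  obtain _ | m := m
  · rw [coeff_Ypoly_zero, coeff_X_mul_zero, mul_zero]
  rw [coeff_X_mul, coeff_map, coeff_mirrorProduct]
  split_ifs with hm
  · obtain ⟨l, rfl⟩ := Nat.exists_eq_add_of_le hm
    rw [show m + l + 2 = m + 1 + (l + 1) by ring, coeff_Ypoly_add m.succ_ne_zero l.succ_ne_zero,
      Nat.add_sub_cancel_left, show m + 1 + (l + 1) = m + l + 2 by ring, pow_add]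
    simp [evenLambda]
  · rw [coeff_Ypoly_eq_zero_of_le (by lia), map_zero, mul_zero]

lemma antitone_evenLambda : Antitone evenLambda := fun i j hij ↦
  antitoneOn_dirichletLambda (Set.mem_Ici.2 (by lia)) (Set.mem_Ici.2 (by lia)) (by lia)

lemma one_le_evenLambda (i : ℕ) : 1 ≤ evenLambda i := one_le_dirichletLambda (by lia)

lemma evenLambda_zero_lt (n : ℕ) : evenLambda 0 < 2 * evenLambda n :=
  dirichletLambda_two_lt_two.trans_le (by linarith [one_le_evenLambda n])

lemma Ypoly_ne_zero (n : ℕ) : Ypoly (n + 2) ≠ 0 := by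
  have hpos (i : ℕ) : evenLambda i ≠ 0 := (one_pos.trans_le (one_le_evenLambda i)).ne'
  have hmap : (mirrorProduct evenLambda n).map (algebraMap ℝ ℂ) ≠ 0 :=
    (Polynomial.map_ne_zero_iff (algebraMap ℝ ℂ).injective).2
      (mirrorProduct_ne_zero (hpos 0) (hpos n))
  rw [Ypoly_eq_mirrorProduct]
  exact mul_ne_zero (C_ne_zero.2 (by simp)) (mul_ne_zero X_ne_zero hmap)

lemma roots_Ypoly (n : ℕ) :
    (Ypoly (n + 2)).roots = 0 ::ₘ (mirrorProduct evenLambda n).aroots ℂ := by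
  have hconst : (4 * (-1) ^ n : ℂ) ≠ 0 := by simp
  have hne := Ypoly_ne_zero n
  rw [Ypoly_eq_mirrorProduct] at hne ⊢
  rw [roots_C_mul _ hconst, roots_mul (right_ne_zero_of_mul hne), roots_X, Multiset.singleton_add]

lemma nodup_roots_Ypoly (n : ℕ) : (Ypoly (n + 2)).roots.Nodup := by
  obtain ⟨hnodup, hnorm⟩ :=
    aroots_mirrorProduct_nodup_and_norm_eq_one antitone_evenLambda (evenLambda_zero_lt n)
  rw [roots_Ypoly, Multiset.nodup_cons]
  exact ⟨fun h0 ↦ by simpa using hnorm 0 h0, hnodup⟩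

lemma norm_eq_one_of_mem_roots_Ypoly {n : ℕ} {z : ℂ} (hz : z ∈ (Ypoly (n + 2)).roots)
    (hz0 : z ≠ 0) : ‖z‖ = 1 := by
  rw [roots_Ypoly, Multiset.mem_cons] at hz
  exact (aroots_mirrorProduct_nodup_and_norm_eq_one antitone_evenLambda
    (evenLambda_zero_lt n)).2 z (hz.resolve_left hz0)

/-- Every non-zero complex root of `Y_k` lies on the unit circle,
and all roots of `Y_k` are simple. -/
theorem Ypoly_roots_on_unit_circle_and_simple (k : ℕ) (hk : 2 ≤ k) :
    (∀ z : ℂ, (Ypoly k).IsRoot z → z ≠ 0 → ‖z‖ = 1) ∧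
    (∀ z : ℂ, (Ypoly k).IsRoot z → Polynomial.rootMultiplicity z (Ypoly k) = 1) := by
  obtain ⟨n, rfl⟩ := Nat.exists_eq_add_of_le' hk
  have hmem {z : ℂ} (hz : (Ypoly (n + 2)).IsRoot z) : z ∈ (Ypoly (n + 2)).roots :=
    (mem_roots (Ypoly_ne_zero n)).2 hz
  refine ⟨fun z hz hz0 ↦ norm_eq_one_of_mem_roots_Ypoly (hmem hz) hz0, fun z hz ↦ ?_⟩
  rw [← count_roots, Multiset.count_eq_one_of_mem (nodup_roots_Ypoly n) (hmem hz)]
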